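/- Let d ≥ 1 be an integer. There exist constants C = C(d) > 0 and c = c(d) > 0 such that for every 1 ≤ p ≤ ∞, every j ∈ ℤ, every t > 0, and every f ∈ 𝒮(ℝ^d), the function u_j(x) := (2π)^{−d} ∫_{ℝ^d} e^{i x·ξ} e^{−t|ξ|} φ̂₀(2^{−j}ξ) F[f](ξ) dξ satisfies ‖u_j‖_{L^p(ℝ^d)} ≤ C e^{−c 2^j t} ‖Δ_j f‖_{L^p(ℝ^d)}. (This is the dissipative estimate for the Poisson semigroup e^{−t|∇|} on Littlewood–Paley blocks.) -/

import Mathlib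

/-!
On the frequencies of `Δ_j f` the symbol of `e^{-t|∇|}` may be multiplied by a smooth cut-off of a
dyadic annulus, so `e^{-t|∇|} Δ_j f` is the convolution of `Δ_j f` with an integrable kernel, and by
Young's inequality it suffices to bound the `L¹` norm of that kernel by `C e^{-c 2^j t}`. The `L¹`
norm of an inverse Fourier transform is invariant under dilations of the symbol, which reduces the
matter to the unit annulus and the symbols `e^{-s|ξ|} χ(ξ)` with `s = 2^j t`. There `|ξ|` is smooth
and bounded below by some `ρ > c`: each derivative costs a power of `s`, and `e^{-s(ρ - c)}` absorbs
it. Hence every Schwartz seminorm of `e^{-s|ξ|} χ`, and with it the `L¹` norm of the kernel, is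
`O(e^{-cs})`.
-/

open MeasureTheory Filter Complex
open scoped ENNReal NNReal RealInnerProductSpace Topology

noncomputable section

abbrev Rd (d : ℕ) := EuclideanSpace ℝ (Fin d)

/-- Fourier transform with the paper's convention `F[f](ξ) = ∫ e^{-i x·ξ} f(x) dx`. -/
def FT {d : ℕ} (f : Rd d → ℂ) (ξ : Rd d) : ℂ :=
  ∫ x : Rd d, Complex.exp (-Complex.I * (↑(⟪x, ξ⟫) : ℂ)) * f x

/-- A Littlewood–Paley family: a Schwartz function `φ₀` whose Fourier transform is
real, takes values in `[0,1]`, is supported in the annulus `1/2 ≤ |ξ| ≤ 2`, and whose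
dyadic dilates sum to `1` away from the origin. -/
structure LPData (d : ℕ) where
  φ : SchwartzMap (Rd d) ℂ
  him : ∀ ξ : Rd d, (FT (⇑φ) ξ).im = 0
  h0 : ∀ ξ : Rd d, 0 ≤ (FT (⇑φ) ξ).re
  h1 : ∀ ξ : Rd d, (FT (⇑φ) ξ).re ≤ 1
  hsupp : ∀ ξ : Rd d, FT (⇑φ) ξ ≠ 0 → (1/2 : ℝ) ≤ ‖ξ‖ ∧ ‖ξ‖ ≤ 2
  hsum : ∀ ξ : Rd d, ξ ≠ 0 → HasSum (fun j : ℤ => FT (⇑φ) ((2:ℝ) ^ (-j) • ξ)) 1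

/-- Littlewood–Paley block `Δ_j f = φ_j * f`, where `φ_j(x) = 2^{dj} φ₀(2^j x)`. -/
def LP {d : ℕ} (P : LPData d) (j : ℤ) (f : Rd d → ℂ) (x : Rd d) : ℂ :=
  ∫ y : Rd d, (((2:ℝ) ^ ((d : ℤ) * j) : ℝ) : ℂ) * P.φ ((2:ℝ) ^ j • y) * f (x - y)

/-- `ℓ^r(ℤ)`-norm of a family of extended nonnegative reals. -/
def ellNorm (r : ℝ≥0∞) (a : ℤ → ℝ≥0∞) : ℝ≥0∞ :=
  if r = ∞ then ⨆ j, a j else (∑' j, a j ^ r.toReal) ^ (1 / r.toReal)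

/-- Homogeneous Besov norm `‖f‖_{Ḃ^s_{p,r}}`. -/
def besov {d : ℕ} (P : LPData d) (s : ℝ) (p r : ℝ≥0∞) (f : Rd d → ℂ) : ℝ≥0∞ :=
  ellNorm r fun j => ENNReal.ofReal ((2:ℝ) ^ (s * (j:ℝ))) * eLpNorm (LP P j f) p volume

/-- Mixed norm `L^q_t(0,∞; L^p_x)`. -/
def LqLp {d : ℕ} (q p : ℝ≥0∞) (g : ℝ → Rd d → ℂ) : ℝ≥0∞ :=
  if q = ∞ then essSup (fun t => eLpNorm (g t) p volume) (volume.restrict (Set.Ioi (0:ℝ)))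
  else (∫⁻ t in Set.Ioi (0:ℝ), (eLpNorm (g t) p volume) ^ q.toReal) ^ (1 / q.toReal)

/-- Chemin–Lerner norm `‖f‖_{L̃^q(Ḃ^s_{p,r})}` on `ℝ^d × (0,∞)`. -/
def CL {d : ℕ} (P : LPData d) (s : ℝ) (q p r : ℝ≥0∞) (f : ℝ → Rd d → ℂ) : ℝ≥0∞ :=
  ellNorm r fun j => ENNReal.ofReal ((2:ℝ) ^ (s * (j:ℝ))) * LqLp q p fun t => LP P j (f t)

/-- `f : ℝ^d × (0,∞) → ℂ` (curried as `f t x`) is slice-Schwartz: continuous on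
`ℝ^d × (0,∞)` and Schwartz in `x` for each fixed `t > 0`. -/
def SliceSchwartz {d : ℕ} (f : ℝ → Rd d → ℂ) : Prop :=
  ContinuousOn (fun z : Rd d × ℝ => f z.2 z.1) (Set.univ ×ˢ Set.Ioi 0) ∧
  ∀ t : ℝ, 0 < t → ∃ g : SchwartzMap (Rd d) ℂ, f t = ⇑g

open scoped Convolution FourierTransform SchwartzMap ContDiff

section Young

theorem lintegral_mul_rpow_le {α : Type*} [MeasurableSpace α] {μ : Measure α} {f g : α → ℝ≥0∞}
    (hf : AEMeasurable f μ) (hg : AEMeasurable g μ) {r : ℝ} (hr : 1 ≤ r) :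
    (∫⁻ a, f a * g a ∂μ) ^ r ≤ (∫⁻ a, f a ∂μ) ^ (r - 1) * ∫⁻ a, f a * g a ^ r ∂μ := by
  have hr0 : 0 < r := by positivity
  have hexp : (1 - r⁻¹) + r⁻¹ = 1 := by ring
  have hinv : 0 ≤ 1 - r⁻¹ := sub_nonneg.2 (inv_le_one_of_one_le₀ hr)
  have hsplit (a : α) : f a ^ (1 - r⁻¹) * (f a * g a ^ r) ^ r⁻¹ = f a * g a := by
    rw [ENNReal.mul_rpow_of_nonneg _ _ (by positivity), ENNReal.rpow_rpow_inv hr0.ne', ← mul_assoc,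
      ← ENNReal.rpow_add_of_nonneg _ _ hinv (by positivity), hexp, ENNReal.rpow_one]
  have hölder := ENNReal.lintegral_mul_norm_pow_le hf (hf.mul (hg.pow_const r)) hinv
    (by positivity : 0 ≤ r⁻¹) hexp
  simp only [Pi.mul_apply, hsplit] at hölder
  calc (∫⁻ a, f a * g a ∂μ) ^ r
      ≤ ((∫⁻ a, f a ∂μ) ^ (1 - r⁻¹) * (∫⁻ a, f a * g a ^ r ∂μ) ^ r⁻¹) ^ r :=
        ENNReal.rpow_le_rpow hölder hr0.le
    _ = (∫⁻ a, f a ∂μ) ^ (r - 1) * ∫⁻ a, f a * g a ^ r ∂μ := by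
        rw [ENNReal.mul_rpow_of_nonneg _ _ hr0.le, ← ENNReal.rpow_mul,
          ENNReal.rpow_inv_rpow hr0.ne', sub_mul, one_mul, inv_mul_cancel₀ hr0.ne']

variable {G : Type*} [MeasurableSpace G] [AddCommGroup G] [MeasurableAdd₂ G] [MeasurableNeg G]
  {μ : Measure G} [SFinite μ] [μ.IsAddLeftInvariant]

theorem aemeasurable_prod_mul_sub {F H : G → ℝ≥0∞} (hF : AEMeasurable F μ)
    (hH : AEMeasurable H μ) : AEMeasurable (fun z : G × G => F z.2 * H (z.1 - z.2)) (μ.prod μ) :=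
  (hF.comp_quasiMeasurePreserving Measure.quasiMeasurePreserving_snd).mul
    (hH.comp_quasiMeasurePreserving (quasiMeasurePreserving_sub_of_right_invariant μ μ))

theorem lintegral_lintegral_mul_sub {F H : G → ℝ≥0∞} (hF : AEMeasurable F μ)
    (hH : AEMeasurable H μ) :
    ∫⁻ x, ∫⁻ t, F t * H (x - t) ∂μ ∂μ = (∫⁻ t, F t ∂μ) * ∫⁻ x, H x ∂μ := by
  calc ∫⁻ x, ∫⁻ t, F t * H (x - t) ∂μ ∂μ
      = ∫⁻ t, ∫⁻ x, F t * H (x - t) ∂μ ∂μ :=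
        lintegral_lintegral_swap (aemeasurable_prod_mul_sub hF hH)
    _ = ∫⁻ t, F t * ∫⁻ x, H x ∂μ ∂μ := by
        refine lintegral_congr fun t => ?_
        have hHt : AEMeasurable (fun x => H (x - t)) μ := hH.comp_quasiMeasurePreserving
          (measurePreserving_sub_right μ t).quasiMeasurePreserving
        rw [lintegral_const_mul'' _ hHt, lintegral_sub_right_eq_self]
    _ = (∫⁻ t, F t ∂μ) * ∫⁻ x, H x ∂μ := lintegral_mul_const'' _ hF

variable {𝕜 E₁ E₂ E₃ : Type*} [NontriviallyNormedField 𝕜] [NormedAddCommGroup E₁]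
  [NormedAddCommGroup E₂] [NormedAddCommGroup E₃] [NormedSpace 𝕜 E₁] [NormedSpace 𝕜 E₂]
  [NormedSpace 𝕜 E₃] [NormedSpace ℝ E₃]

theorem enorm_convolution_le {G : Type*} [MeasurableSpace G] [Sub G] {μ : Measure G}
    (L : E₁ →L[𝕜] E₂ →L[𝕜] E₃) (f : G → E₁) (g : G → E₂) (x : G) :
    ‖(f ⋆[L, μ] g) x‖ₑ ≤ ‖L‖ₑ * ∫⁻ t, ‖f t‖ₑ * ‖g (x - t)‖ₑ ∂μ := by
  calc ‖(f ⋆[L, μ] g) x‖ₑ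
      ≤ ∫⁻ t, ‖L (f t) (g (x - t))‖ₑ ∂μ := enorm_integral_le_lintegral_enorm _
    _ ≤ ∫⁻ t, ‖L‖ₑ * (‖f t‖ₑ * ‖g (x - t)‖ₑ) ∂μ := lintegral_mono fun t => by
        rw [← mul_assoc]
        exact (L (f t)).le_opENorm _ |>.trans (mul_le_mul_left (L.le_opENorm _) _)
    _ = ‖L‖ₑ * ∫⁻ t, ‖f t‖ₑ * ‖g (x - t)‖ₑ ∂μ := lintegral_const_mul' _ _ enorm_ne_top

theorem eLpNormEssSup_convolution_le (L : E₁ →L[𝕜] E₂ →L[𝕜] E₃) (f : G → E₁) (g : G → E₂)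
    (hf : AEStronglyMeasurable f μ) :
    eLpNormEssSup (f ⋆[L, μ] g) μ ≤ ‖L‖ₑ * eLpNorm f 1 μ * eLpNormEssSup g μ := by
  refine essSup_le_of_ae_le _ (ae_of_all _ fun x => (enorm_convolution_le L f g x).trans ?_)
  have hg : ∀ᵐ t ∂μ, ‖g (x - t)‖ₑ ≤ eLpNormEssSup g μ :=
    (quasiMeasurePreserving_sub_left_of_right_invariant μ x).ae
      (enorm_ae_le_eLpNormEssSup g μ)
  calc ‖L‖ₑ * ∫⁻ t, ‖f t‖ₑ * ‖g (x - t)‖ₑ ∂μ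
      ≤ ‖L‖ₑ * ∫⁻ t, ‖f t‖ₑ * eLpNormEssSup g μ ∂μ := by
        gcongr 1
        exact lintegral_mono_ae (hg.mono fun t ht => by gcongr)
    _ = ‖L‖ₑ * eLpNorm f 1 μ * eLpNormEssSup g μ := by
        rw [lintegral_mul_const'' _ hf.enorm, eLpNorm_one_eq_lintegral_enorm, mul_assoc]

theorem eLpNorm_convolution_le (L : E₁ →L[𝕜] E₂ →L[𝕜] E₃) {f : G → E₁} {g : G → E₂}
    (hf : AEStronglyMeasurable f μ) (hg : AEStronglyMeasurable g μ) {p : ℝ≥0∞} (hp : 1 ≤ p) :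
    eLpNorm (f ⋆[L, μ] g) p μ ≤ ‖L‖ₑ * eLpNorm f 1 μ * eLpNorm g p μ := by
  rcases eq_or_ne p ∞ with rfl | hp_top
  · simpa only [eLpNorm_exponent_top] using eLpNormEssSup_convolution_le L f g hf
  set r := p.toReal
  have hp_zero : p ≠ 0 := (zero_lt_one.trans_le hp).ne'
  have hr : 1 ≤ r := by simpa using ENNReal.toReal_mono hp_top hp
  have hr0 : 0 < r := by positivity
  have hsub (x : G) : AEMeasurable (fun t => ‖g (x - t)‖ₑ) μ :=
    hg.enorm.comp_quasiMeasurePreserving (quasiMeasurePreserving_sub_left_of_right_invariant μ x)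
  have hpow (a : ℝ≥0∞) : a ^ (r - 1) * a = a ^ r := by
    simpa using (ENNReal.rpow_add_of_nonneg (x := a) (r - 1) 1 (sub_nonneg.2 hr) zero_le_one).symm
  rw [← ENNReal.rpow_le_rpow_iff hr0, eLpNorm_eq_lintegral_rpow_enorm_toReal hp_zero hp_top,
    eLpNorm_eq_lintegral_rpow_enorm_toReal hp_zero hp_top, eLpNorm_one_eq_lintegral_enorm]
  simp only [one_div, ENNReal.mul_rpow_of_nonneg _ _ hr0.le, r, ENNReal.rpow_inv_rpow hr0.ne']
  calc ∫⁻ x, ‖(f ⋆[L, μ] g) x‖ₑ ^ r ∂μ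
      ≤ ∫⁻ x, ‖L‖ₑ ^ r * ((∫⁻ t, ‖f t‖ₑ ∂μ) ^ (r - 1) *
          ∫⁻ t, ‖f t‖ₑ * ‖g (x - t)‖ₑ ^ r ∂μ) ∂μ := lintegral_mono fun x => by
        grw [enorm_convolution_le, ENNReal.mul_rpow_of_nonneg _ _ hr0.le,
          lintegral_mul_rpow_le hf.enorm (hsub x) hr]
    _ = ‖L‖ₑ ^ r * (∫⁻ t, ‖f t‖ₑ ∂μ) ^ r * ∫⁻ x, ‖g x‖ₑ ^ r ∂μ := by
        rw [lintegral_const_mul' _ _ (ENNReal.rpow_ne_top_of_nonneg hr0.le enorm_ne_top),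
          lintegral_const_mul'' _ (aemeasurable_prod_mul_sub hf.enorm
            (hg.enorm.pow_const r)).lintegral_prod_right',
          lintegral_lintegral_mul_sub hf.enorm (hg.enorm.pow_const r), ← mul_assoc, ← mul_assoc,
          mul_assoc (‖L‖ₑ ^ r), hpow]

theorem eLpNorm_lsmul_convolution_le [NormedSpace ℝ E₂] {k : G → 𝕜} {g : G → E₂}
    (hk : AEStronglyMeasurable k μ) (hg : AEStronglyMeasurable g μ) {p : ℝ≥0∞} (hp : 1 ≤ p) :
    eLpNorm (k ⋆[ContinuousLinearMap.lsmul 𝕜 𝕜, μ] g) p μ ≤ eLpNorm k 1 μ * eLpNorm g p μ := by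
  refine (eLpNorm_convolution_le (ContinuousLinearMap.lsmul 𝕜 𝕜) hk hg hp).trans ?_
  grw [ContinuousLinearMap.opENorm_lsmul_le, one_mul]

end Young

section FourierMultiplier

theorem lintegral_comp_smul {V : Type*} [NormedAddCommGroup V] [NormedSpace ℝ V]
    [FiniteDimensional ℝ V] [MeasurableSpace V] [BorelSpace V] (μ : Measure V)
    [μ.IsAddHaarMeasure] {a : ℝ} (ha : a ≠ 0) (f : V → ℝ≥0∞) :
    ∫⁻ x, f (a • x) ∂μ = ENNReal.ofReal |(a ^ Module.finrank ℝ V)⁻¹| * ∫⁻ x, f x ∂μ := by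
  have hemb : MeasurableEmbedding (fun x : V => a • x) :=
    (Homeomorph.smulOfNeZero a ha).measurableEmbedding
  rw [← hemb.lintegral_map, Measure.map_addHaar_smul μ ha, lintegral_smul_measure, smul_eq_mul]

variable {V E : Type*} [NormedAddCommGroup V] [InnerProductSpace ℝ V] [FiniteDimensional ℝ V]
  [MeasurableSpace V] [BorelSpace V] [NormedAddCommGroup E] [NormedSpace ℂ E]

theorem fourier_comp_smul {a : ℝ} (ha : a ≠ 0) (f : V → E) (ξ : V) :
    𝓕 (fun x => f (a • x)) ξ = |(a ^ Module.finrank ℝ V)⁻¹| • 𝓕 f (a⁻¹ • ξ) := by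
  simp only [Real.fourier_eq]
  rw [← Measure.integral_comp_smul]
  simp only [real_inner_smul_left, real_inner_smul_right, inv_mul_cancel_left₀ ha]

theorem fourierInv_comp_smul {a : ℝ} (ha : a ≠ 0) (f : V → E) (x : V) :
    𝓕⁻ (fun ξ => f (a • ξ)) x = |(a ^ Module.finrank ℝ V)⁻¹| • 𝓕⁻ f (a⁻¹ • x) := by
  simp only [Real.fourierInv_eq_fourier_neg, fourier_comp_smul ha, smul_neg]

theorem eLpNorm_one_fourierInv_comp_smul {a : ℝ} (ha : a ≠ 0) (f : V → E) :
    eLpNorm (𝓕⁻ fun ξ => f (a • ξ)) 1 = eLpNorm (𝓕⁻ f) 1 := by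
  have habs : |(a ^ Module.finrank ℝ V)⁻¹| * |(a⁻¹ ^ Module.finrank ℝ V)⁻¹| = 1 := by
    rw [← abs_mul, inv_pow, inv_inv, inv_mul_cancel₀ (pow_ne_zero _ ha), abs_one]
  simp only [eLpNorm_one_eq_lintegral_enorm, fourierInv_comp_smul ha, enorm_smul]
  rw [lintegral_const_mul' _ _ enorm_ne_top, lintegral_comp_smul volume (inv_ne_zero ha)
    (fun x => ‖𝓕⁻ f x‖ₑ), ← mul_assoc, Real.enorm_of_nonneg (abs_nonneg _),
    ← ENNReal.ofReal_mul (abs_nonneg _), habs, ENNReal.ofReal_one, one_mul]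

theorem continuous_fourier {f : V → E} (hf : Integrable f) : Continuous (𝓕 f) :=
  VectorFourier.fourierIntegral_continuous Real.continuous_fourierChar
    (innerSL ℝ).continuous₂ hf

theorem norm_fourier_le (f : V → E) (ξ : V) : ‖𝓕 f ξ‖ ≤ ∫ x, ‖f x‖ :=
  VectorFourier.norm_fourierIntegral_le_integral_norm _ _ _ _ _

theorem integrable_fourier_of_fourierInv {f : V → E} (hf : Integrable (𝓕⁻ f)) :
    Integrable (𝓕 f) := by
  simpa only [Real.fourierInv_eq_fourier_neg, neg_neg] using hf.comp_neg

/-- The Fourier multiplier `m(D)`, acting on a function `g` by `g ↦ 𝓕⁻ (m 𝓕 g)`. Mathlib's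
`SchwartzMap.fourierMultiplierCLM` only acts on Schwartz functions, whereas here `g` and `m` are
arbitrary; the Bochner integrals are meaningful when `g` and `m 𝓕 g` are integrable. -/
def fourierMultiplier (m : V → ℂ) (g : V → E) : V → E :=
  𝓕⁻ fun ξ => m ξ • 𝓕 g ξ

variable [CompleteSpace E]

theorem fourierMultiplier_eq_convolution {m : V → ℂ} {g : V → E} (hm : Continuous m)
    (hm_int : Integrable m) (hm_inv : Integrable (𝓕⁻ m)) (hg : Integrable g) :
    fourierMultiplier m g = 𝓕⁻ m ⋆[ContinuousLinearMap.lsmul ℂ ℂ] g := by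
  have hsymbol : (fun ξ => m ξ • 𝓕 g ξ) = 𝓕 (𝓕⁻ m ⋆[ContinuousLinearMap.lsmul ℂ ℂ] g) := by
    ext ξ
    rw [Real.fourier_smul_convolution_eq hm_inv hg, hm.fourier_fourierInv_eq hm_int
      (integrable_fourier_of_fourierInv hm_inv)]
  have hcont : Continuous (𝓕⁻ m ⋆[ContinuousLinearMap.lsmul ℂ ℂ] g) := by
    have hbdd : BddAbove (Set.range fun x => ‖𝓕⁻ m x‖) := by
      refine ⟨∫ ξ, ‖m ξ‖, Set.forall_mem_range.2 fun x => ?_⟩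
      simpa only [Real.fourierInv_eq_fourier_neg] using norm_fourier_le m (-x)
    have hinv_cont : Continuous (𝓕⁻ m) := by
      rw [funext (Real.fourierInv_eq_fourier_neg m)]
      exact (continuous_fourier hm_int).comp continuous_neg
    exact hbdd.continuous_convolution_left_of_integrable _ hinv_cont hg
  have hint : Integrable fun ξ => m ξ • 𝓕 g ξ :=
    hm_int.smul_bdd (∫ x, ‖g x‖) (continuous_fourier hg).aestronglyMeasurable
      (ae_of_all _ (norm_fourier_le g))
  rw [fourierMultiplier, hsymbol, hcont.fourierInv_fourier_eq
    (hm_inv.integrable_convolution _ hg) (hsymbol ▸ hint)]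

theorem eLpNorm_fourierMultiplier_le {m : V → ℂ} {g : V → E} (hm : Continuous m)
    (hm_int : Integrable m) (hm_inv : Integrable (𝓕⁻ m)) (hg : Integrable g) {p : ℝ≥0∞}
    (hp : 1 ≤ p) :
    eLpNorm (fourierMultiplier m g) p ≤ eLpNorm (𝓕⁻ m) 1 * eLpNorm g p := by
  rw [fourierMultiplier_eq_convolution hm hm_int hm_inv hg]
  exact eLpNorm_lsmul_convolution_le hm_inv.aestronglyMeasurable hg.aestronglyMeasurable hp

theorem eLpNorm_fourierMultiplier_comp_smul_le {m : V → ℂ} {g : V → E} (hm : Continuous m)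
    (hm_int : Integrable m) (hm_inv : Integrable (𝓕⁻ m)) (hg : Integrable g) {p : ℝ≥0∞}
    (hp : 1 ≤ p) {a : ℝ} (ha : a ≠ 0) :
    eLpNorm (fourierMultiplier (fun ξ => m (a • ξ)) g) p ≤ eLpNorm (𝓕⁻ m) 1 * eLpNorm g p := by
  have hdil_inv : Integrable (𝓕⁻ fun ξ => m (a • ξ)) := by
    rw [funext (fourierInv_comp_smul ha m)]
    exact (hm_inv.comp_smul (inv_ne_zero ha)).smul _
  rw [← eLpNorm_one_fourierInv_comp_smul ha m]
  exact eLpNorm_fourierMultiplier_le (m := fun ξ => m (a • ξ))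
    (hm.comp (continuous_const_smul a)) (hm_int.comp_smul ha) hdil_inv hg hp

end FourierMultiplier

section ExpDamping

open scoped Nat

theorem exists_one_add_pow_mul_exp_neg_le (n : ℕ) {c ρ : ℝ} (hc : c < ρ) :
    ∃ C > 0, ∀ s ≥ 0, (1 + s) ^ n * Real.exp (-(s * ρ)) ≤ C * Real.exp (-(s * c)) := by
  obtain ⟨δ, hδ, rfl⟩ : ∃ δ > 0, ρ = c + δ := ⟨ρ - c, sub_pos.2 hc, by ring⟩
  refine ⟨n ! / δ ^ n * Real.exp δ, by positivity, fun s hs => ?_⟩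
  have hpow : (δ * (1 + s)) ^ n ≤ n ! * Real.exp (δ * (1 + s)) := by
    rw [← div_le_iff₀' (by positivity)]
    exact Real.pow_div_factorial_le_exp _ (by positivity) n
  calc (1 + s) ^ n * Real.exp (-(s * (c + δ)))
      = (δ * (1 + s)) ^ n / δ ^ n * Real.exp (-(s * (c + δ))) := by
        rw [mul_pow, mul_div_cancel_left₀ _ (by positivity)]
    _ ≤ n ! * Real.exp (δ * (1 + s)) / δ ^ n * Real.exp (-(s * (c + δ))) := by gcongr
    _ = n ! / δ ^ n * (Real.exp (δ * (1 + s)) * Real.exp (-(s * (c + δ)))) := by ring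
    _ = n ! / δ ^ n * (Real.exp δ * Real.exp (-(s * c))) := by
        rw [← Real.exp_add, ← Real.exp_add]; ring_nf
    _ = n ! / δ ^ n * Real.exp δ * Real.exp (-(s * c)) := by ring

variable {V F : Type*} [NormedAddCommGroup V] [NormedSpace ℝ V] [NormedAddCommGroup F]
  [NormedSpace ℝ F]

theorem exists_norm_iteratedFDerivWithin_le_of_isCompact {K U : Set V} {f : V → F} {n : ℕ}
    (hK : IsCompact K) (hU : IsOpen U) (hKU : K ⊆ U) (hf : ContDiffOn ℝ n f U) :
    ∃ B ≥ 1, ∀ i ≤ n, ∀ x ∈ K, ‖iteratedFDerivWithin ℝ i f U x‖ ≤ B := by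
  have hbound (i : ℕ) (hi : i ≤ n) : ∃ B, ∀ x ∈ K, ‖iteratedFDerivWithin ℝ i f U x‖ ≤ B :=
    hK.exists_bound_of_continuousOn
      ((hf.continuousOn_iteratedFDerivWithin (mod_cast hi) hU.uniqueDiffOn).mono hKU)
  choose! B hB using hbound
  obtain ⟨M, hM⟩ := ((Finset.range (n + 1)).image B).bddAbove
  refine ⟨max 1 M, le_max_left _ _, fun i hi x hx => (hB i hi x hx).trans (le_max_of_le_right ?_)⟩
  exact hM (Finset.mem_coe.2 (Finset.mem_image_of_mem B (Finset.mem_range_succ_iff.2 hi)))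

theorem norm_iteratedFDerivWithin_smul_le_of_le {U : Set V} {f : V → ℝ} {g : V → F} {n : ℕ}
    {A B : ℝ} {x : V} (hU : UniqueDiffOn ℝ U) (hf : ContDiffOn ℝ n f U) (hg : ContDiffOn ℝ n g U)
    (hx : x ∈ U) (hA : ∀ i ≤ n, ‖iteratedFDerivWithin ℝ i f U x‖ ≤ A)
    (hB : ∀ i ≤ n, ‖iteratedFDerivWithin ℝ i g U x‖ ≤ B) :
    ‖iteratedFDerivWithin ℝ n (fun y => f y • g y) U x‖ ≤ 2 ^ n * (A * B) := by
  have hA0 : 0 ≤ A := (norm_nonneg _).trans (hA 0 n.zero_le)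
  calc ‖iteratedFDerivWithin ℝ n (fun y => f y • g y) U x‖
      ≤ ∑ i ∈ Finset.range (n + 1), (n.choose i : ℝ) * ‖iteratedFDerivWithin ℝ i f U x‖ *
          ‖iteratedFDerivWithin ℝ (n - i) g U x‖ :=
        norm_iteratedFDerivWithin_smul_le hf hg hU hx le_rfl
    _ ≤ ∑ i ∈ Finset.range (n + 1), (n.choose i : ℝ) * A * B := by
        gcongr with i hi
        · exact hA i (Finset.mem_range_succ_iff.1 hi)
        · exact hB (n - i) (Nat.sub_le n i)
    _ = 2 ^ n * (A * B) := by
        rw [← Finset.sum_mul, ← Finset.sum_mul, mul_assoc]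
        exact_mod_cast congrArg (fun k : ℕ => (k : ℝ) * (A * B)) (Nat.sum_range_choose n)

-- With `1 + s` in place of `s` the base is at least `1` for `1 ≤ D`, so that order `n` dominates
-- all lower orders.
theorem norm_iteratedFDerivWithin_exp_neg_mul_le {U : Set V} {h : V → ℝ} {n : ℕ} {s D : ℝ} {x : V}
    (hU : UniqueDiffOn ℝ U) (hh : ContDiffOn ℝ n h U) (hs : 0 ≤ s) (hx : x ∈ U)
    (hD : ∀ i, 1 ≤ i → i ≤ n → ‖iteratedFDerivWithin ℝ i h U x‖ ≤ D ^ i) :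
    ‖iteratedFDerivWithin ℝ n (fun y => Real.exp (-(s * h y))) U x‖ ≤
      n ! * Real.exp (-(s * h x)) * ((1 + s) * D) ^ n := by
  refine norm_iteratedFDerivWithin_comp_le (g := Real.exp) (f := fun y => -(s * h y))
    Real.contDiff_exp.contDiffOn (hh.const_smul s).neg le_rfl uniqueDiffOn_univ hU
    (Set.mapsTo_univ _ _) hx (fun i _ => ?_) fun i hi hin => ?_
  · rw [iteratedFDerivWithin_univ, norm_iteratedFDeriv_eq_norm_iteratedDeriv,
      iteratedDeriv_eq_iterate, Real.iter_deriv_exp, Real.norm_of_nonneg (Real.exp_nonneg _)]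
  · have hderiv : ‖iteratedFDerivWithin ℝ i (fun y => -(s * h y)) U x‖ =
        s * ‖iteratedFDerivWithin ℝ i h U x‖ := by
      have hfun : (fun y => -(s * h y)) = (-s) • h := by ext; simp
      rw [hfun, iteratedFDerivWithin_const_smul_apply (hh.of_le (mod_cast hin) x hx) hU hx,
        norm_smul, norm_neg, Real.norm_of_nonneg hs]
    calc ‖iteratedFDerivWithin ℝ i (fun y => -(s * h y)) U x‖
        = s * ‖iteratedFDerivWithin ℝ i h U x‖ := hderiv
      _ ≤ (1 + s) ^ i * D ^ i := by
          gcongr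
          · calc s ≤ 1 + s := by linarith
              _ ≤ (1 + s) ^ i := le_self_pow₀ (by linarith) (by lia)
          · exact hD i hi hin
      _ = ((1 + s) * D) ^ i := (mul_pow _ _ _).symm

theorem exists_norm_iteratedFDerivWithin_exp_neg_mul_le {K U : Set V} {h : V → ℝ} {c : ℝ} {n : ℕ}
    (hK : IsCompact K) (hU : IsOpen U) (hKU : K ⊆ U) (hh : ContDiffOn ℝ n h U)
    (hc : ∀ x ∈ K, c < h x) :
    ∃ C > 0, ∀ s ≥ 0, ∀ i ≤ n, ∀ x ∈ K,
      ‖iteratedFDerivWithin ℝ i (fun y => Real.exp (-(s * h y))) U x‖ ≤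
        C * Real.exp (-(s * c)) := by
  obtain ⟨D, hD1, hD⟩ := exists_norm_iteratedFDerivWithin_le_of_isCompact hK hU hKU hh
  obtain ⟨ρ, hcρ, hρ⟩ := hK.exists_forall_le' (hh.continuousOn.mono hKU) hc
  obtain ⟨A, hA, hexp⟩ := exists_one_add_pow_mul_exp_neg_le n hcρ
  refine ⟨n ! * D ^ n * A, by positivity, fun s hs i hi x hx => ?_⟩
  calc ‖iteratedFDerivWithin ℝ i (fun y => Real.exp (-(s * h y))) U x‖
      ≤ i ! * Real.exp (-(s * h x)) * ((1 + s) * D) ^ i :=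
        norm_iteratedFDerivWithin_exp_neg_mul_le hU.uniqueDiffOn (hh.of_le (mod_cast hi)) hs
          (hKU hx) fun k hk hki =>
            (hD k (hki.trans hi) x hx).trans (le_self_pow₀ hD1 (Nat.one_le_iff_ne_zero.1 hk))
    _ ≤ n ! * Real.exp (-(s * ρ)) * ((1 + s) * D) ^ n := by
        gcongr
        · exact hρ x hx
        · exact one_le_mul_of_one_le_of_one_le (by linarith) hD1
    _ = n ! * D ^ n * ((1 + s) ^ n * Real.exp (-(s * ρ))) := by rw [mul_pow]; ring
    _ ≤ n ! * D ^ n * (A * Real.exp (-(s * c))) :=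
        mul_le_mul_of_nonneg_left (hexp s hs) (by positivity)
    _ = n ! * D ^ n * A * Real.exp (-(s * c)) := by ring

/-- The exponentially damped version `e^{-s h} χ` of a cut-off function `χ`. -/
def expDamp {X F : Type*} [NormedAddCommGroup F] [NormedSpace ℝ F] (h : X → ℝ) (χ : X → F) (s : ℝ)
    (x : X) : F :=
  Real.exp (-(s * h x)) • χ x

theorem tsupport_expDamp_subset {X F : Type*} [TopologicalSpace X] [NormedAddCommGroup F]
    [NormedSpace ℝ F] (h : X → ℝ) (χ : X → F) (s : ℝ) : tsupport (expDamp h χ s) ⊆ tsupport χ :=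
  tsupport_smul_subset_right _ _

theorem hasCompactSupport_expDamp {X F : Type*} [TopologicalSpace X] [NormedAddCommGroup F]
    [NormedSpace ℝ F] (h : X → ℝ) {χ : X → F} (hχ : HasCompactSupport χ) (s : ℝ) :
    HasCompactSupport (expDamp h χ s) :=
  hχ.smul_left

variable {h : V → ℝ} {χ : V → F} {U : Set V}

theorem contDiff_expDamp (hU : IsOpen U) (hχU : tsupport χ ⊆ U) (hh : ContDiffOn ℝ ∞ h U)
    (hχ : ContDiff ℝ ∞ χ) (s : ℝ) : ContDiff ℝ ∞ (expDamp h χ s) := by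
  refine contDiff_iff_contDiffAt.2 fun x => ?_
  by_cases hx : x ∈ tsupport χ
  · have hhx : ContDiffAt ℝ ∞ h x := hh.contDiffAt (hU.mem_nhds (hχU hx))
    exact (contDiffAt_const.mul hhx).neg.exp.smul hχ.contDiffAt
  · have hx' : x ∉ tsupport (expDamp h χ s) := fun hmem => hx (tsupport_expDamp_subset h χ s hmem)
    exact contDiffAt_const.congr_of_eventuallyEq (notMem_tsupport_iff_eventuallyEq.1 hx')

theorem exists_norm_iteratedFDeriv_expDamp_le {c : ℝ} (hU : IsOpen U) (hχU : tsupport χ ⊆ U)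
    (hh : ContDiffOn ℝ ∞ h U) (hχ : ContDiff ℝ ∞ χ) (hχ_supp : HasCompactSupport χ)
    (hc : ∀ x ∈ tsupport χ, c < h x) (n : ℕ) :
    ∃ C > 0, ∀ s ≥ 0, ∀ x, ‖iteratedFDeriv ℝ n (expDamp h χ s) x‖ ≤ C * Real.exp (-(s * c)) := by
  have hhn : ContDiffOn ℝ n h U := hh.of_le (mod_cast le_top)
  have hχn : ContDiffOn ℝ n χ U := (hχ.of_le (mod_cast le_top)).contDiffOn
  obtain ⟨A, hA, hexp⟩ := exists_norm_iteratedFDerivWithin_exp_neg_mul_le hχ_supp hU hχU hhn hc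
  obtain ⟨B, hB1, hB⟩ := exists_norm_iteratedFDerivWithin_le_of_isCompact hχ_supp hU hχU hχn
  refine ⟨2 ^ n * (A * B), by positivity, fun s hs x => ?_⟩
  by_cases hx : x ∈ tsupport χ
  · rw [← iteratedFDerivWithin_of_isOpen n hU (hχU hx)]
    calc ‖iteratedFDerivWithin ℝ n (expDamp h χ s) U x‖
        ≤ 2 ^ n * (A * Real.exp (-(s * c)) * B) :=
          norm_iteratedFDerivWithin_smul_le_of_le hU.uniqueDiffOn (hhn.const_smul s).neg.exp hχn
            (hχU hx) (fun i hi => hexp s hs i hi x hx) fun i hi => hB i hi x hx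
      _ = 2 ^ n * (A * B) * Real.exp (-(s * c)) := by ring
  · rw [Function.notMem_support.1 fun hmem => hx (tsupport_expDamp_subset h χ s
      (support_iteratedFDeriv_subset n hmem)), norm_zero]
    positivity

end ExpDamping

section SchwartzFourierInv

variable {V F : Type*} [NormedAddCommGroup V] [InnerProductSpace ℝ V] [FiniteDimensional ℝ V]
  [MeasurableSpace V] [BorelSpace V] [NormedAddCommGroup F] [NormedSpace ℂ F]

theorem integrable_fourierInv_of_hasCompactSupport {f : V → F} (hf_supp : HasCompactSupport f)
    (hf : ContDiff ℝ ∞ f) : Integrable (𝓕⁻ f) :=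
  (SchwartzMap.fourierInv_coe (hf_supp.toSchwartzMap hf)).symm ▸ (𝓕⁻ _ : 𝓢(V, F)).integrable

theorem exists_eLpNorm_one_fourierInv_le_seminorm :
    ∃ (s : Finset (ℕ × ℕ)) (C : ℝ≥0), ∀ f : 𝓢(V, F), eLpNorm (𝓕⁻ (f : V → F)) 1 ≤
      ENNReal.ofReal (C * s.sup (schwartzSeminormFamily ℝ V F) f) := by
  let T : 𝓢(V, F) →L[ℝ] Lp F 1 (volume : Measure V) :=
    SchwartzMap.toLpCLM ℝ F 1 volume ∘L FourierTransform.fourierInvCLM ℝ 𝓢(V, F)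
  obtain ⟨s, C, -, hC⟩ := Seminorm.bound_of_continuous (schwartz_withSeminorms ℝ V F)
    ((normSeminorm ℝ _).comp T.toLinearMap) (continuous_norm.comp T.continuous)
  refine ⟨s, C, fun f => ?_⟩
  have hT : eLpNorm (𝓕⁻ (f : V → F)) 1 = ENNReal.ofReal ‖T f‖ := by
    rw [← SchwartzMap.fourierInv_coe, ofReal_norm]
    exact (Lp.enorm_toLp ((𝓕⁻ f).memLp 1 volume)).symm
  rw [hT]
  exact ENNReal.ofReal_le_ofReal (hC f)

theorem exists_eLpNorm_one_fourierInv_le_of_decay {ι : Type*} {f : ι → 𝓢(V, F)} {w : ι → ℝ}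
    (hf : ∀ k n : ℕ, ∃ C > 0, ∀ i x, ‖x‖ ^ k * ‖iteratedFDeriv ℝ n (f i) x‖ ≤ C * w i) :
    ∃ C > 0, ∀ i, eLpNorm (𝓕⁻ (f i : V → F)) 1 ≤ ENNReal.ofReal (C * w i) := by
  obtain ⟨s, A, hA⟩ := exists_eLpNorm_one_fourierInv_le_seminorm (V := V) (F := F)
  choose B hB0 hB using hf
  have hw (i : ι) : 0 ≤ w i := nonneg_of_mul_nonneg_right
    ((mul_nonneg (by positivity) (norm_nonneg _)).trans (hB 0 0 i 0)) (hB0 0 0)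
  obtain ⟨M, hM⟩ := (s.image fun k => B k.1 k.2).bddAbove
  refine ⟨A * max 0 M + 1, by positivity, fun i => (hA (f i)).trans (ENNReal.ofReal_le_ofReal ?_)⟩
  have hsup : s.sup (schwartzSeminormFamily ℝ V F) (f i) ≤ max 0 M * w i := by
    refine Seminorm.finset_sup_apply_le (mul_nonneg (le_max_left _ _) (hw i)) fun k hk => ?_
    refine (f i).seminorm_le_bound ℝ k.1 k.2 (mul_nonneg (le_max_left _ _) (hw i)) fun x => ?_
    refine (hB k.1 k.2 i x).trans (mul_le_mul_of_nonneg_right (le_max_of_le_right ?_) (hw i))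
    exact hM (Finset.mem_coe.2 (Finset.mem_image_of_mem (fun k => B k.1 k.2) hk))
  calc A * s.sup (schwartzSeminormFamily ℝ V F) (f i) ≤ A * (max 0 M * w i) := by gcongr
    _ ≤ (A * max 0 M + 1) * w i := by linarith [hw i]

theorem exists_eLpNorm_one_fourierInv_expDamp_le {h : V → ℝ} {χ : V → F} {U : Set V} {c : ℝ}
    (hU : IsOpen U) (hχU : tsupport χ ⊆ U) (hh : ContDiffOn ℝ ∞ h U) (hχ : ContDiff ℝ ∞ χ)
    (hχ_supp : HasCompactSupport χ) (hc : ∀ x ∈ tsupport χ, c < h x) :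
    ∃ C > 0, ∀ s ≥ 0,
      eLpNorm (𝓕⁻ (expDamp h χ s)) 1 ≤ ENNReal.ofReal (C * Real.exp (-(s * c))) := by
  let N (s : Set.Ici (0 : ℝ)) : 𝓢(V, F) :=
    (hasCompactSupport_expDamp h hχ_supp s).toSchwartzMap (contDiff_expDamp hU hχU hh hχ s)
  obtain ⟨R, hR⟩ := hχ_supp.isBounded.exists_norm_le
  have hdecay (k n : ℕ) : ∃ C > 0, ∀ (s : Set.Ici (0 : ℝ)) x,
      ‖x‖ ^ k * ‖iteratedFDeriv ℝ n (N s) x‖ ≤ C * Real.exp (-(s * c)) := by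
    obtain ⟨B, hB0, hB⟩ :=
      exists_norm_iteratedFDeriv_expDamp_le hU hχU hh hχ hχ_supp hc n
    refine ⟨max 1 R ^ k * B, by positivity, fun s x => ?_⟩
    by_cases hx : x ∈ tsupport χ
    · rw [mul_assoc]
      exact mul_le_mul (pow_le_pow_left₀ (norm_nonneg x) ((hR x hx).trans (le_max_right _ _)) k)
        (hB s s.2 x) (norm_nonneg _) (by positivity)
    · have hzero : iteratedFDeriv ℝ n (N s) x = 0 := Function.notMem_support.1 fun hmem =>
        hx (tsupport_expDamp_subset h χ s (support_iteratedFDeriv_subset n hmem))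
      rw [hzero, norm_zero, mul_zero]
      positivity
  obtain ⟨C, hC0, hC⟩ := exists_eLpNorm_one_fourierInv_le_of_decay hdecay
  exact ⟨C, hC0, fun s hs => hC ⟨s, hs⟩⟩

end SchwartzFourierInv

section DampedMultiplier

theorem exists_contDiff_hasCompactSupport_eqOn_one {V : Type*} [NormedAddCommGroup V]
    [NormedSpace ℝ V] [FiniteDimensional ℝ V] {K U : Set V} (hK : IsCompact K) (hU : IsOpen U)
    (hKU : K ⊆ U) :
    ∃ χ : V → ℂ, ContDiff ℝ ∞ χ ∧ HasCompactSupport χ ∧ tsupport χ ⊆ U ∧ Set.EqOn χ 1 K := by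
  obtain ⟨L, hL, hKL, hLU⟩ := exists_compact_between hK hU hKU
  obtain ⟨χ, hone, hzero, -⟩ := exists_contMDiffMap_one_nhds_of_subset_interior (n := ⊤)
    (modelWithCornersSelf ℝ V) hK.isClosed hKL
  have hsupp : tsupport (fun x => (χ x : ℂ)) ⊆ L := closure_minimal
    (fun x hx => by_contra fun hxL => hx (by simp [hzero x hxL])) hL.isClosed
  exact ⟨fun x => χ x, ofRealCLM.contDiff.comp χ.contMDiff.contDiff,
    hL.of_isClosed_subset isClosed_closure hsupp, hsupp.trans hLU,
    fun x hx => by simp [hone.self_of_nhdsSet x hx]⟩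

variable {V E : Type*} [NormedAddCommGroup V] [InnerProductSpace ℝ V] [FiniteDimensional ℝ V]
  [MeasurableSpace V] [BorelSpace V] [NormedAddCommGroup E] [NormedSpace ℂ E] [CompleteSpace E]

theorem exists_eLpNorm_fourierMultiplier_exp_neg_le {h : V → ℝ} {K U : Set V} {c : ℝ}
    (hK : IsCompact K) (hU : IsOpen U) (hKU : K ⊆ U) (hh : ContDiffOn ℝ ∞ h U)
    (hc : ∀ x ∈ K, c < h x) :
    ∃ C > 0, ∀ p : ℝ≥0∞, 1 ≤ p → ∀ s ≥ 0, ∀ a : ℝ, a ≠ 0 → ∀ g : V → E, Integrable g →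
      (∀ ξ, 𝓕 g ξ ≠ 0 → a • ξ ∈ K) →
      eLpNorm (fourierMultiplier (fun ξ => Real.exp (-(s * h (a • ξ)))) g) p ≤
        ENNReal.ofReal (C * Real.exp (-(s * c))) * eLpNorm g p := by
  have hU' : IsOpen (U ∩ h ⁻¹' Set.Ioi c) := hh.continuousOn.isOpen_inter_preimage hU isOpen_Ioi
  obtain ⟨χ, hχ, hχ_supp, hχU, hχK⟩ :=
    exists_contDiff_hasCompactSupport_eqOn_one hK hU' fun x hx => ⟨hKU hx, hc x hx⟩
  have hχU_left : tsupport χ ⊆ U := fun x hx => (hχU hx).1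
  have hχc : ∀ x ∈ tsupport χ, c < h x := fun x hx => (hχU hx).2
  obtain ⟨C, hC0, hC⟩ :=
    exists_eLpNorm_one_fourierInv_expDamp_le hU hχU_left hh hχ hχ_supp hχc
  refine ⟨C, hC0, fun p hp s hs a ha g hg hgK => ?_⟩
  have hm := contDiff_expDamp hU hχU_left hh hχ s
  have hm_supp := hasCompactSupport_expDamp h hχ_supp s
  have hsymbol : fourierMultiplier (fun ξ => Real.exp (-(s * h (a • ξ)))) g =
      fourierMultiplier (fun ξ => expDamp h χ s (a • ξ)) g := by
    unfold fourierMultiplier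
    congr 1
    ext ξ
    by_cases hξ : 𝓕 g ξ = 0
    · simp only [hξ, smul_zero]
    · simp [expDamp, hχK (hgK ξ hξ)]
  have hm_int : Integrable (expDamp h χ s) := hm.continuous.integrable_of_hasCompactSupport hm_supp
  have hm_inv : Integrable (𝓕⁻ (expDamp h χ s)) :=
    integrable_fourierInv_of_hasCompactSupport hm_supp hm
  rw [hsymbol]
  refine (eLpNorm_fourierMultiplier_comp_smul_le hm.continuous hm_int hm_inv hg hp ha).trans ?_
  exact mul_le_mul_left (hC s hs) _

/-- The Poisson semigroup `e^{-t|∇|}`. Since Mathlib normalises `𝓕` by `e^{-2πi⟪x, ξ⟫}`, its symbol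
is `e^{-t‖2πξ‖}`. -/
def poissonSemigroup (t : ℝ) (g : V → E) : V → E :=
  fourierMultiplier (fun ξ => Real.exp (-(t * ‖(2 * Real.pi) • ξ‖))) g

theorem exists_eLpNorm_poissonSemigroup_le {r R c : ℝ} (hr : 0 < r) (hc : c < r) :
    ∃ C > 0, ∀ p : ℝ≥0∞, 1 ≤ p → ∀ t ≥ 0, ∀ a > 0, ∀ g : V → E, Integrable g →
      (∀ ξ, 𝓕 g ξ ≠ 0 → ‖(2 * Real.pi) • ξ‖ ∈ Set.Icc (a * r) (a * R)) →
      eLpNorm (poissonSemigroup t g) p ≤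
        ENNReal.ofReal (C * Real.exp (-(t * a * c))) * eLpNorm g p := by
  have hK : IsCompact (Metric.closedBall (0 : V) R \ Metric.ball 0 r) :=
    (isCompact_closedBall 0 R).diff Metric.isOpen_ball
  have hmem {x : V} : x ∈ Metric.closedBall (0 : V) R \ Metric.ball 0 r ↔ ‖x‖ ∈ Set.Icc r R := by
    simp [and_comm]
  obtain ⟨C, hC0, hC⟩ := exists_eLpNorm_fourierMultiplier_exp_neg_le (E := E) hK
    isOpen_compl_singleton (fun x hx => norm_pos_iff.1 (hr.trans_le (hmem.1 hx).1))
    (contDiffOn_id.norm ℝ fun _ hx => hx) fun x hx => hc.trans_le (hmem.1 hx).1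
  refine ⟨C, hC0, fun p hp t ht a ha g hg hgK => ?_⟩
  have hscale (ξ : V) : ‖(a⁻¹ * (2 * Real.pi)) • ξ‖ = ‖(2 * Real.pi) • ξ‖ / a := by
    rw [mul_smul, norm_smul, Real.norm_of_nonneg (by positivity), inv_mul_eq_div]
  have hdilate (ξ : V) (hξ : 𝓕 g ξ ≠ 0) : (a⁻¹ * (2 * Real.pi)) • ξ ∈
      Metric.closedBall (0 : V) R \ Metric.ball 0 r := by
    rw [hmem, hscale, Set.mem_Icc, le_div_iff₀' ha, div_le_iff₀' ha]
    exact hgK ξ hξ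
  have hsymbol (ξ : V) :
      t * a * ‖(a⁻¹ * (2 * Real.pi)) • ξ‖ = t * ‖(2 * Real.pi) • ξ‖ := by
    rw [hscale, mul_assoc, mul_div_cancel₀ _ ha.ne']
  simpa only [poissonSemigroup, id_eq, hsymbol] using
    hC p hp (t * a) (by positivity) (a⁻¹ * (2 * Real.pi)) (by positivity) g hg hdilate

end DampedMultiplier

section LittlewoodPaley

variable {d : ℕ}

theorem FT_eq_fourier (f : Rd d → ℂ) (ξ : Rd d) : FT f ξ = 𝓕 f ((2 * Real.pi)⁻¹ • ξ) := by
  have hphase (x : Rd d) : -2 * Real.pi * ⟪x, (2 * Real.pi)⁻¹ • ξ⟫ = -⟪x, ξ⟫ := by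
    rw [real_inner_smul_right]
    field_simp
  simp_rw [FT, Real.fourier_eq', hphase, smul_eq_mul, ofReal_neg, neg_mul, mul_comm I]

theorem FT_two_pi_smul (f : Rd d → ℂ) (ξ : Rd d) : FT f ((2 * Real.pi) • ξ) = 𝓕 f ξ := by
  rw [FT_eq_fourier, inv_smul_smul₀ (by positivity)]

theorem inv_two_pi_pow_mul_integral_eq_fourierInv (G : Rd d → ℂ) (x : Rd d) :
    (((2 * Real.pi) ^ d : ℝ) : ℂ)⁻¹ * ∫ ξ, cexp (I * ⟪x, ξ⟫) * G ξ =
      𝓕⁻ (fun ξ => G ((2 * Real.pi) • ξ)) x := by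
  have hphase (ξ : Rd d) : cexp (((2 * Real.pi * ⟪ξ, x⟫ : ℝ) : ℂ) * I) =
      cexp (I * ⟪x, (2 * Real.pi) • ξ⟫) := by
    rw [real_inner_smul_right, real_inner_comm, mul_comm I]
  simp only [Real.fourierInv_eq', hphase, smul_eq_mul]
  rw [Measure.integral_comp_smul volume (fun ξ => cexp (I * ⟪x, ξ⟫) * G ξ),
    abs_of_nonneg (by positivity), finrank_euclideanSpace_fin, real_smul, ofReal_inv]

/-- The kernel `φ_j(x) = 2^{dj} φ₀(2^j x)` of the Littlewood–Paley block `Δ_j`. -/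
def lpKernel (P : LPData d) (j : ℤ) (x : Rd d) : ℂ :=
  (((2 : ℝ) ^ ((d : ℤ) * j) : ℝ) : ℂ) * P.φ ((2 : ℝ) ^ j • x)

variable (P : LPData d) (j : ℤ) {f : Rd d → ℂ}

theorem integrable_lpKernel : Integrable (lpKernel P j) :=
  (P.φ.integrable.comp_smul (zpow_ne_zero j two_ne_zero)).const_mul _

theorem fourier_lpKernel (ξ : Rd d) :
    𝓕 (lpKernel P j) ξ = 𝓕 (P.φ : Rd d → ℂ) ((2 : ℝ) ^ (-j) • ξ) := by
  have hdil := fourier_comp_smul (zpow_ne_zero j two_ne_zero : (2 : ℝ) ^ j ≠ 0)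
    (P.φ : Rd d → ℂ) ξ
  have hscale : (2 : ℝ) ^ ((d : ℤ) * j) * |(((2 : ℝ) ^ j) ^ d)⁻¹| = 1 := by
    rw [abs_of_nonneg (by positivity), mul_comm (d : ℤ), zpow_mul, zpow_natCast,
      mul_inv_cancel₀ (by positivity)]
  calc 𝓕 (lpKernel P j) ξ
      = (((2 : ℝ) ^ ((d : ℤ) * j) : ℝ) : ℂ) • 𝓕 (fun x => P.φ ((2 : ℝ) ^ j • x)) ξ :=
        congrFun (VectorFourier.fourierIntegral_const_smul _ _ _ _ _) ξ
    _ = 𝓕 (P.φ : Rd d → ℂ) ((2 : ℝ) ^ (-j) • ξ) := by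
        rw [hdil, finrank_euclideanSpace_fin, coe_smul, smul_smul, hscale, one_smul, zpow_neg]

theorem LP_eq_convolution (f : Rd d → ℂ) :
    LP P j f = lpKernel P j ⋆[ContinuousLinearMap.mul ℂ ℂ] f :=
  rfl

theorem integrable_LP (hf : Integrable f) : Integrable (LP P j f) :=
  (integrable_lpKernel P j).integrable_convolution (ContinuousLinearMap.mul ℂ ℂ) hf

theorem fourier_LP (hf : Integrable f) (ξ : Rd d) :
    𝓕 (LP P j f) ξ = FT P.φ ((2 : ℝ) ^ (-j) • (2 * Real.pi) • ξ) * FT f ((2 * Real.pi) • ξ) := by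
  rw [LP_eq_convolution, Real.fourier_mul_convolution_eq (integrable_lpKernel P j) hf,
    fourier_lpKernel, smul_comm, FT_two_pi_smul, FT_two_pi_smul]

theorem norm_mem_Icc_of_fourier_LP_ne_zero (hf : Integrable f) {ξ : Rd d}
    (hξ : 𝓕 (LP P j f) ξ ≠ 0) :
    ‖(2 * Real.pi) • ξ‖ ∈ Set.Icc ((2 : ℝ) ^ j * (1 / 2)) ((2 : ℝ) ^ j * 2) := by
  rw [fourier_LP P j hf] at hξ
  have hφ := P.hsupp _ (left_ne_zero_of_mul hξ)
  rwa [norm_smul, zpow_neg, norm_inv, Real.norm_of_nonneg (by positivity), inv_mul_eq_div,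
    le_div_iff₀' (by positivity), div_le_iff₀' (by positivity)] at hφ

theorem poissonSemigroup_LP (hf : Integrable f) (t : ℝ) (x : Rd d) :
    poissonSemigroup t (LP P j f) x = (((2 * Real.pi) ^ d : ℝ) : ℂ)⁻¹ *
      ∫ ξ : Rd d, cexp (I * ⟪x, ξ⟫) * cexp (-(t * ‖ξ‖ : ℝ)) *
        FT P.φ ((2 : ℝ) ^ (-j) • ξ) * FT f ξ := by
  simp only [poissonSemigroup, fourierMultiplier, fourier_LP P j hf, smul_eq_mul, mul_assoc,
    inv_two_pi_pow_mul_integral_eq_fourierInv, ofReal_exp, ofReal_neg]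

end LittlewoodPaley

theorem poisson_semigroup_dissipative_estimate_general (d : ℕ) :
    ∃ C > (0 : ℝ), ∃ c > (0 : ℝ), ∀ (P : LPData d) (p : ℝ≥0∞), 1 ≤ p → ∀ (j : ℤ) (t : ℝ), 0 ≤ t →
      ∀ f : Rd d → ℂ, Integrable f →
      eLpNorm (fun x : Rd d => (((2 * Real.pi) ^ d : ℝ) : ℂ)⁻¹ *
          ∫ ξ : Rd d, cexp (I * ⟪x, ξ⟫) * cexp (-(t * ‖ξ‖ : ℝ)) *
            FT P.φ ((2 : ℝ) ^ (-j) • ξ) * FT f ξ) p volume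
        ≤ ENNReal.ofReal (C * Real.exp (-c * (2 : ℝ) ^ j * t)) * eLpNorm (LP P j f) p volume := by
  obtain ⟨C, hC0, hC⟩ := exists_eLpNorm_poissonSemigroup_le (V := Rd d) (E := ℂ) (R := 2)
    (by norm_num : (0 : ℝ) < 1 / 2) (by norm_num : (1 / 4 : ℝ) < 1 / 2)
  refine ⟨C, hC0, 1 / 4, by norm_num, fun P p hp j t ht f hf => ?_⟩
  have hrate : -(1 / 4) * (2 : ℝ) ^ j * t = -(t * (2 : ℝ) ^ j * (1 / 4)) := by ring
  simp only [← poissonSemigroup_LP P j hf, hrate]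
  exact hC p hp t ht _ (by positivity) _ (integrable_LP P j hf)
    fun ξ => norm_mem_Icc_of_fourier_LP_ne_zero P j hf

/-- Dissipative estimate for the Poisson semigroup `e^{-t|∇|}`
on Littlewood–Paley blocks: `‖e^{-t|∇|} Δ_j f‖_{L^p} ≤ C e^{-c 2^j t} ‖Δ_j f‖_{L^p}`. -/
theorem poisson_semigroup_dissipative_estimate (d : ℕ) (hd : 1 ≤ d) (P : LPData d) :
    ∃ C > (0:ℝ), ∃ c > (0:ℝ), ∀ p : ℝ≥0∞, 1 ≤ p → ∀ j : ℤ, ∀ t : ℝ, 0 < t →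
      ∀ f : SchwartzMap (Rd d) ℂ,
      eLpNorm (fun x : Rd d =>
          (((2 * Real.pi) ^ d : ℝ) : ℂ)⁻¹ *
            ∫ ξ : Rd d, Complex.exp (Complex.I * (↑(⟪x, ξ⟫) : ℂ)) *
              Complex.exp (-(↑(t * ‖ξ‖) : ℂ)) *
              FT (⇑P.φ) ((2:ℝ) ^ (-j) • ξ) * FT (⇑f) ξ) p volume
        ≤ ENNReal.ofReal (C * Real.exp (-c * (2:ℝ) ^ j * t)) *
            eLpNorm (LP P j (⇑f)) p volume := by
  obtain ⟨C, hC, c, hc, h⟩ := poisson_semigroup_dissipative_estimate_general d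
  exact ⟨C, hC, c, hc, fun p hp j t ht f => h P p hp j t ht.le f f.integrable⟩
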